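/- arXiv:2402.03938 — 2 statements merged into one kernel-verified Lean document; each statement's English description precedes it below -/
import Mathlib

section
/- (Camion) For any abelian code C in A_q(r_1,…,r_s), the apparent distance of C is a lower bound for its minimum distance: d*(C) ≤ d(C). -/
open Classical

noncomputable section

namespace AbelianCodes

/-- The index set `I = Z_{r 0} × ⋯ × Z_{r (s-1)}`. -/
abbrev Idx {s : ℕ} (r : Fin s → ℕ) : Type := ∀ k, ZMod (r k)

variable {F : Type*} [Field F]

/-- The support of a hypermatrix. -/
def hsupp {s : ℕ} {r : Fin s → ℕ} (M : Idx r → F) : Set (Idx r) := {i | M i ≠ 0}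

/-- The hypercolumn `H_M(k,b)` of a hypermatrix, viewed as an `(s-1)`-dimensional
hypermatrix indexed by `∏_{j ≠ k} Z_{r j}`. -/
def hypercol {s : ℕ} {r : Fin (s+1) → ℕ} (M : Idx r → F) (k : Fin (s+1)) (b : ZMod (r k)) :
    Idx (fun j => r (k.succAbove j)) → F :=
  fun i => M (k.insertNth b i)

/-- `ω_M(k,b)`: the number of consecutive zero hypercolumns
`H_M(k,b+1), H_M(k,b+2), …` (indices modulo `r k`). -/
def runLen {s : ℕ} {r : Fin (s+1) → ℕ} (M : Idx r → F) (k : Fin (s+1)) (b : ZMod (r k)) : ℕ :=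
  ((Finset.Ico 1 (r k)).filter
    (fun j => ∀ m : ℕ, m ∈ Finset.Icc 1 j → hypercol M k (b + (m : ZMod (r k))) = 0)).card

/-- The apparent distance `d*(M)` of a hypermatrix, defined recursively on the
number of variables.  (A `0`-dimensional hypermatrix is a scalar, of apparent
distance `1` if nonzero and `0` otherwise; with this convention the `1`-dimensional
case becomes `max {ω_M(b)+1 : a_b ≠ 0}` and the higher-dimensional case becomes
`max_k max {(ω_M(k,b)+1)·d*(H_M(k,b)) : H_M(k,b) ≠ 0}`, since zero hypermatrices
have apparent distance `0`.) -/
def apd : {s : ℕ} → (r : Fin s → ℕ) → (Idx r → F) → ℕ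
  | 0, _, M => if M finZeroElim = 0 then 0 else 1
  | _+1, r, M =>
      Finset.univ.sup fun k =>
        Finset.univ.sup fun b : Fin (r k) =>
          (runLen M k ((b : ℕ) : ZMod (r k)) + 1) *
            apd (fun j => r (k.succAbove j)) (hypercol M k ((b : ℕ) : ZMod (r k)))

/-- The `q^t`-orbit `Q_t(a)` of `a ∈ I`. -/
def qOrbit {s : ℕ} (r : Fin s → ℕ) (q t : ℕ) (a : Idx r) : Set (Idx r) :=
  {i | ∃ n : ℕ, ∀ k, i k = (q : ZMod (r k)) ^ (t * n) * a k}

/-- `D` is a union of `q^t`-orbits. -/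
def OrbitUnion {s : ℕ} (r : Fin s → ℕ) (q t : ℕ) (D : Set (Idx r)) : Prop :=
  ∀ a ∈ D, qOrbit r q t a ⊆ D

/-- The hypermatrix afforded by `D ⊆ I`: entry `0` at indices in `D`, entry `1` elsewhere. -/
def afforded {s : ℕ} (r : Fin s → ℕ) (D : Set (Idx r)) : Idx r → F :=
  fun i => if i ∈ D then 0 else 1

/-- `M` is a `q^t`-orbits hypermatrix, i.e. the hypermatrix afforded by some union
of `q^t`-orbits. -/
def IsOrbitMx {s : ℕ} (r : Fin s → ℕ) (q t : ℕ) (M : Idx r → F) : Prop :=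
  ∃ D : Set (Idx r), OrbitUnion r q t D ∧ M = afforded r D

/-- The minimum apparent distance `mad(M) = min {d*(P) : P a q^t-orbits hypermatrix,
`0 ≠ P ≤ M`}`, where `P ≤ M` means `supp P ⊆ supp M`. -/
def mad {s : ℕ} (r : Fin s → ℕ) (q t : ℕ) (M : Idx r → F) : ℕ :=
  sInf {d | ∃ P : Idx r → F, IsOrbitMx r q t P ∧ P ≠ 0 ∧ hsupp P ⊆ hsupp M ∧ apd r P = d}

/-- The `q^t`-cyclotomic coset of `b` modulo `r`. -/
def cycCoset (r q t : ℕ) (b : ZMod r) : Set (ZMod r) :=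
  {x | ∃ n : ℕ, x = (q : ZMod r) ^ (t * n) * b}



variable {F : Type*} [Field F] {L : Type*} [Field L] [Algebra F L]

/-- An abelian code: a subspace of the group algebra `F[∏ Z_{r k}]` (identified
with the space of coefficient functions `I → F`) which is closed under all
translations, i.e. an ideal. -/
def IsAbelianCode {s : ℕ} {r : Fin s → ℕ} (C : Submodule F (Idx r → F)) : Prop :=
  ∀ f ∈ C, ∀ a : Idx r, (fun i => f (i - a)) ∈ C

/-- Convolution: the multiplication of the group algebra in the coefficient
function picture. -/
def conv {s : ℕ} {r : Fin s → ℕ} [∀ k, NeZero (r k)] (f g : Idx r → F) : Idx r → F :=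
  fun i => ∑ u : Idx r, f u * g (i - u)

/-- The (discrete) Fourier transform `φ_{α,f}(j) = f(α^j)` of a coefficient
function `f : I → F` with respect to `α`, with values in the extension `L`. -/
def fourier {s : ℕ} {r : Fin s → ℕ} [∀ k, NeZero (r k)] (α : Fin s → L) (f : Idx r → F) :
    Idx r → L :=
  fun j => ∑ i : Idx r, algebraMap F L (f i) * ∏ k, α k ^ ((i k).val * (j k).val)

/-- The Hamming weight of a codeword. -/
def wt {s : ℕ} {r : Fin s → ℕ} [∀ k, NeZero (r k)] (f : Idx r → F) : ℕ :=
  (Finset.univ.filter fun i : Idx r => f i ≠ 0).card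

/-- The minimum distance of a code. -/
def dmin {s : ℕ} {r : Fin s → ℕ} [∀ k, NeZero (r k)] (C : Submodule F (Idx r → F)) : ℕ :=
  sInf {w | ∃ f ∈ C, f ≠ (0 : Idx r → F) ∧ wt f = w}

/-- The defining set `D_α(C) = {a ∈ I : f(α^a) = 0 for all f ∈ C}`. -/
def defSet {s : ℕ} (r : Fin s → ℕ) [∀ k, NeZero (r k)] (α : Fin s → L)
    (C : Submodule F (Idx r → F)) : Set (Idx r) :=
  {a | ∀ f ∈ C, fourier α f a = 0}

/-- The apparent distance of a code `C` with respect to `α`: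
`d_α*(C) = min {d*(M(φ_{α,e})) : 0 ≠ e = e² ∈ C}`. -/
def dStarAlpha {s : ℕ} (r : Fin s → ℕ) [∀ k, NeZero (r k)] (α : Fin s → L)
    (C : Submodule F (Idx r → F)) : ℕ :=
  sInf {d | ∃ e, e ∈ C ∧ e ≠ (0 : Idx r → F) ∧ conv e e = e ∧ apd r (fourier α e) = d}

/-- The apparent distance of a code: `d*(C) = max {d_β*(C) : β ∈ U}`, where `U`
is the set of tuples of primitive roots of unity in `L`. -/
def dStarCode {s : ℕ} (r : Fin s → ℕ) [∀ k, NeZero (r k)] (L : Type*) [Field L] [Algebra F L]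
    (C : Submodule F (Idx r → F)) : ℕ :=
  sSup {d | ∃ α : Fin s → L, (∀ k, IsPrimitiveRoot (α k) (r k)) ∧ dStarAlpha r α C = d}

/-- The defining set of the multivariate BCH code `B_q(α,γ,δ,b)`:
`∪_{k∈γ} ∪_{l=0}^{δ_k−2} ∪_{i ∈ I(k, b_k+l)} Q(i)`. -/
def bchDefSet {s : ℕ} (r : Fin s → ℕ) (q : ℕ) (γ : Finset (Fin s)) (δ b : Fin s → ℕ) :
    Set (Idx r) :=
  ⋃ k ∈ γ, ⋃ l ∈ Finset.range (δ k - 1),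
    ⋃ i ∈ {i : Idx r | i k = ((b k + l : ℕ) : ZMod (r k))}, qOrbit r q 1 i


theorem camion_key {ι : Type*} {K : Type*} [Field K] (S : Finset ι) (a β : ι → K) (b : ℕ)
    (Q : Polynomial K) (N : ℕ) (hN : Q.natDegree < N) :
    ∑ c ∈ S, a c * β c ^ b * Q.eval (β c) =
      ∑ m ∈ Finset.range N, Q.coeff m * ∑ c ∈ S, a c * β c ^ (b + m) := by
  simp_rw [Polynomial.eval_eq_sum_range' hN, Finset.mul_sum]
  rw [Finset.sum_comm]
  refine Finset.sum_congr rfl fun m _ => Finset.sum_congr rfl fun c _ => ?_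
  ring

theorem camion_bch {ι : Type*} {K : Type*} [Field K] (S : Finset ι) (a β : ι → K) (b : ℕ)
    (hβ : ∀ c ∈ S, β c ≠ 0) (w : ℕ) (h0 : ∑ c ∈ S, a c * β c ^ b ≠ 0)
    (hz : ∀ m, 1 ≤ m → m ≤ w → ∑ c ∈ S, a c * β c ^ (b + m) = 0) :
    w + 1 ≤ S.card := by
  by_contra hlt
  have hlt : S.card < w + 1 := by omega
  have hd : (∏ c ∈ S, (Polynomial.X - Polynomial.C (β c))).natDegree = S.card :=
    Polynomial.natDegree_finsetProd_X_sub_C_eq_card ..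
  have key := camion_key S a β b (∏ c ∈ S, (Polynomial.X - Polynomial.C (β c))) (w+1)
    (by rw [hd]; exact hlt)
  rw [Finset.sum_eq_zero, Finset.sum_range_succ', Finset.sum_eq_zero] at key
  · rw [zero_add, Polynomial.coeff_zero_eq_eval_zero, Polynomial.eval_prod] at key
    simp only [add_zero] at key
    rcases mul_eq_zero.1 key.symm with h | h
    · rw [Finset.prod_eq_zero_iff] at h
      obtain ⟨c, hc, h⟩ := h
      simp at h
      exact hβ c hc h
    · exact h0 h
  · intro m hm
    rw [hz _ (by omega) (by simpa using Finset.mem_range.1 hm), mul_zero]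
  · intro c hc
    rw [Polynomial.eval_prod, Finset.prod_eq_zero hc (by simp), mul_zero]

theorem camion_inj1 {ι : Type*} [Fintype ι] {K : Type*} [Field K] (a β : ι → K)
    (hβ : Function.Injective β)
    (hz : ∀ m, m < Fintype.card ι → ∑ c, a c * β c ^ m = 0) (c0 : ι) : a c0 = 0 := by
  have hd : (∏ c ∈ Finset.univ.erase c0, (Polynomial.X - Polynomial.C (β c))).natDegree
      = (Finset.univ.erase c0).card :=
    Polynomial.natDegree_finsetProd_X_sub_C_eq_card ..
  have hp : 0 < Fintype.card ι := Fintype.card_pos_iff.2 ⟨c0⟩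
  have key := camion_key Finset.univ a β 0
    (∏ c ∈ Finset.univ.erase c0, (Polynomial.X - Polynomial.C (β c))) (Fintype.card ι)
    (by rw [hd, Finset.card_erase_of_mem (Finset.mem_univ _), Finset.card_univ]; omega)
  rw [Finset.sum_eq_single c0] at key
  · rw [Finset.sum_eq_zero, pow_zero, mul_one, Polynomial.eval_prod] at key
    · rcases mul_eq_zero.1 key with h | h
      · exact h
      · rw [Finset.prod_eq_zero_iff] at h
        obtain ⟨c, hc, h⟩ := h
        simp [sub_eq_zero] at h hc
        exact absurd (hβ h).symm hc
    · intro m hm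
      rw [zero_add, hz m (Finset.mem_range.1 hm), mul_zero]
  · intro c _ hc
    rw [Polynomial.eval_prod, Finset.prod_eq_zero (i := c) (by simp [hc]) (by simp), mul_zero]
  · simp

/-- partial transform in direction `k` -/
def ptrans {s : ℕ} {r : Fin (s+1) → ℕ} [∀ k, NeZero (r k)] (α : Fin (s+1) → L)
    (f : Idx r → L) (k : Fin (s+1)) (b : ZMod (r k)) :
    Idx (fun j => r (k.succAbove j)) → L :=
  fun i => ∑ c : ZMod (r k), f (k.insertNth c i) * (α k ^ c.val) ^ b.val

theorem hypercol_fourier {s : ℕ} {r : Fin (s+1) → ℕ} [∀ k, NeZero (r k)] (α : Fin (s+1) → L)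
    (f : Idx r → L) (k : Fin (s+1)) (b : ZMod (r k)) :
    hypercol (fourier α f) k b =
      fourier (fun j => α (k.succAbove j)) (ptrans α f k b) := by
  funext j
  simp only [hypercol, fourier, ptrans, Algebra.algebraMap_self, RingHom.id_apply]
  rw [← (Fin.insertNthEquiv (fun k => ZMod (r k)) k).sum_comp, Fintype.sum_prod_type,
    Finset.sum_comm]
  refine Finset.sum_congr rfl fun i _ => ?_
  rw [Finset.sum_mul]
  refine Finset.sum_congr rfl fun c _ => ?_
  rw [Fin.prod_univ_succAbove _ k]
  simp only [Fin.insertNthEquiv_apply, Fin.insertNth_apply_same, Fin.insertNth_apply_succAbove,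
    pow_mul, mul_assoc]
  rfl

theorem fourier_inj {s : ℕ} : ∀ (r : Fin s → ℕ) [∀ k, NeZero (r k)] (α : Fin s → L)
    (_ : ∀ k, IsPrimitiveRoot (α k) (r k)) (f : Idx r → L), fourier α f = 0 → f = 0 := by
  induction s with
  | zero =>
    intro r _ α _ f h
    funext i
    have := congrFun h i
    simp only [fourier, Algebra.algebraMap_self, RingHom.id_apply, Finset.univ_eq_empty,
      Finset.prod_empty, mul_one, Pi.zero_apply] at this
    rwa [Fintype.sum_subsingleton _ i] at this
  | succ s ih =>
    intro r _ α hα f h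
    have hp : ∀ b, ptrans α f 0 b = 0 := fun b => by
      apply ih _ (fun j => α ((0 : Fin (s+1)).succAbove j)) (fun j => hα _)
      rw [← hypercol_fourier, h]
      rfl
    funext i
    have h1 : f ((0 : Fin (s+1)).insertNth (i 0) (fun j => i ((0 : Fin (s+1)).succAbove j))) = 0 := by
      refine camion_inj1 (fun c => f ((0 : Fin (s+1)).insertNth c
        (fun j => i ((0 : Fin (s+1)).succAbove j)))) (fun c : ZMod (r 0) => α 0 ^ c.val) ?_ ?_ (i 0)
      · intro c d hcd
        exact ZMod.val_injective _ ((hα 0).pow_inj (ZMod.val_lt c) (ZMod.val_lt d) hcd)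
      · intro m hm
        rw [ZMod.card] at hm
        have := congrFun (hp (m : ZMod (r 0))) (fun j => i ((0 : Fin (s+1)).succAbove j))
        simpa [ptrans, ZMod.val_natCast_of_lt hm] using this
    have h2 : ((0 : Fin (s+1)).insertNth (i 0) (fun j => i ((0 : Fin (s+1)).succAbove j)) : Idx r) = i :=
      Fin.insertNth_self_removeNth 0 i
    rwa [h2] at h1

theorem runLen_spec {s : ℕ} {r : Fin (s+1) → ℕ} (M : Idx r → L) (k : Fin (s+1)) (b : ZMod (r k))
    (m : ℕ) (h1 : 1 ≤ m) (hm : m ≤ runLen M k b) : hypercol M k (b + (m : ZMod (r k))) = 0 := by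
  by_contra hne
  have : runLen M k b ≤ (Finset.Ico 1 m).card := by
    refine Finset.card_le_card fun j hj => ?_
    simp only [Finset.mem_filter, Finset.mem_Ico, Finset.mem_Icc] at hj ⊢
    refine ⟨hj.1.1, ?_⟩
    by_contra hjm
    exact hne (hj.2 m ⟨h1, by omega⟩)
  simp at this
  omega

theorem apd_congr {s : ℕ} : ∀ (r : Fin s → ℕ) (M N : Idx r → L), (∀ i, M i = 0 ↔ N i = 0) →
    apd r M = apd r N := by
  induction s with
  | zero =>
    intro r M N h
    simp only [apd, h]
  | succ s ih =>
    intro r M N h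
    have hr : ∀ k b, runLen M k b = runLen N k b := by
      intro k b
      simp only [runLen, hypercol, funext_iff, Pi.zero_apply, h]
    simp only [apd, hr]
    refine Finset.sup_congr rfl fun k _ => Finset.sup_congr rfl fun b _ => ?_
    rw [ih _ (hypercol M k _) (hypercol N k _) (fun i => h _)]

theorem apd_le_wt {s : ℕ} : ∀ (r : Fin s → ℕ) [∀ k, NeZero (r k)] (α : Fin s → L)
    (_ : ∀ k, IsPrimitiveRoot (α k) (r k)) (f : Idx r → L), apd r (fourier α f) ≤ wt f := by
  induction s with
  | zero =>
    intro r _ α _ f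
    simp only [apd]
    split_ifs with h
    · exact Nat.zero_le _
    · simp only [fourier, Algebra.algebraMap_self, RingHom.id_apply, Finset.univ_eq_empty,
        Finset.prod_empty, mul_one] at h
      obtain ⟨i, _, hi⟩ := Finset.exists_ne_zero_of_sum_ne_zero h
      exact Finset.card_pos.2 ⟨i, Finset.mem_filter.2 ⟨Finset.mem_univ _, hi⟩⟩
  | succ s ih =>
    intro r _ α hα f
    simp only [apd]
    refine Finset.sup_le fun k _ => Finset.sup_le fun b' _ => ?_
    generalize ((b' : ℕ) : ZMod (r k)) = b
    have h1 : apd (fun j => r (k.succAbove j)) (hypercol (fourier α f) k b) ≤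
        wt (ptrans α f k b) := by
      rw [hypercol_fourier]
      exact ih _ _ (fun j => hα _) _
    refine (Nat.mul_le_mul_left _ h1).trans ?_
    have hz : ∀ m, 1 ≤ m → m ≤ runLen (fourier α f) k b →
        ptrans α f k (b + (m : ZMod (r k))) = 0 := by
      intro m hm1 hm2
      apply fourier_inj _ (fun j => α (k.succAbove j)) (fun j => hα _)
      rw [← hypercol_fourier]
      exact runLen_spec _ _ _ m hm1 hm2
    generalize runLen (fourier α f) k b = w at hz ⊢
    have hw : wt f = ∑ i : Idx (fun j => r (k.succAbove j)),
        (Finset.univ.filter fun c : ZMod (r k) => f (k.insertNth c i) ≠ 0).card := by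
      simp only [wt, Finset.card_filter]
      rw [← (Fin.insertNthEquiv (fun k => ZMod (r k)) k).sum_comp, Fintype.sum_prod_type,
        Finset.sum_comm]
      rfl
    rw [hw, wt, mul_comm, ← smul_eq_mul, ← Finset.sum_const]
    refine (Finset.sum_le_sum fun i hi => ?_).trans
      (Finset.sum_le_sum_of_subset (Finset.subset_univ _))
    simp only [Finset.mem_filter, Finset.mem_univ, true_and] at hi
    have hk0 : α k ≠ 0 := (hα k).ne_zero (NeZero.ne _)
    have hfil : ∀ g : ZMod (r k) → L,
        ∑ c ∈ Finset.univ.filter (fun c : ZMod (r k) => f (k.insertNth c i) ≠ 0),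
          f (k.insertNth c i) * g c = ∑ c, f (k.insertNth c i) * g c := by
      intro g
      refine Finset.sum_subset (Finset.subset_univ _) fun c _ hc => ?_
      simp only [Finset.mem_filter, Finset.mem_univ, true_and, not_not] at hc
      rw [hc, zero_mul]
    refine camion_bch _ (fun c => f (k.insertNth c i)) (fun c => α k ^ c.val) b.val
      (fun c _ => pow_ne_zero _ hk0) w ?_ ?_
    · rw [hfil]; exact hi
    · intro m hm1 hm2
      rw [hfil]
      refine Eq.trans ?_ (congrFun (hz m hm1 hm2) i)
      refine Finset.sum_congr rfl fun c _ => ?_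
      congr 1
      have : (α k ^ c.val) ^ r k = 1 := by
        rw [← pow_mul, mul_comm, pow_mul, (hα k).pow_eq_one, one_pow]
      rw [pow_eq_pow_mod _ this, ZMod.val_add, ZMod.val_natCast, Nat.add_mod_mod]

theorem fourier_conv {s : ℕ} {r : Fin s → ℕ} [∀ k, NeZero (r k)] (α : Fin s → L)
    (hα : ∀ k, IsPrimitiveRoot (α k) (r k)) (f g : Idx r → F) :
    fourier α (conv f g) = fourier α f * fourier α g := by
  funext j
  simp only [fourier, conv, Pi.mul_apply, map_sum, map_mul]
  rw [Finset.sum_mul_sum]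
  simp_rw [Finset.sum_mul]
  rw [Finset.sum_comm]
  refine Finset.sum_congr rfl fun u _ => ?_
  rw [← Equiv.sum_comp (Equiv.addLeft u)]
  refine Finset.sum_congr rfl fun i _ => ?_
  simp only [Equiv.coe_addLeft, add_sub_cancel_left]
  rw [mul_mul_mul_comm, ← Finset.prod_mul_distrib]
  congr 1
  refine Finset.prod_congr rfl fun k _ => ?_
  rw [← pow_add, ← add_mul, mul_comm, pow_mul, mul_comm (_ + _), pow_mul]
  have : (α k ^ (j k).val) ^ r k = 1 := by
    rw [← pow_mul, mul_comm, pow_mul, (hα k).pow_eq_one, one_pow]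
  rw [Pi.add_apply, ZMod.val_add, ← pow_eq_pow_mod _ this]

theorem conv_mem {s : ℕ} {r : Fin s → ℕ} [∀ k, NeZero (r k)]
    (C : Submodule F (Idx r → F)) (hC : IsAbelianCode C) (f g : Idx r → F) (hg : g ∈ C) :
    conv f g ∈ C := by
  have : conv f g = ∑ u : Idx r, f u • (fun i => g (i - u)) := by
    funext i
    simp [conv]
  rw [this]
  exact C.sum_mem fun u _ => C.smul_mem _ (hC g hg u)

theorem fourier_map {s : ℕ} {r : Fin s → ℕ} [∀ k, NeZero (r k)] (α : Fin s → L) (f : Idx r → F) :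
    fourier α (fun i => algebraMap F L (f i)) = fourier α f := rfl

theorem fourier_inj' {s : ℕ} {r : Fin s → ℕ} [∀ k, NeZero (r k)] (α : Fin s → L)
    (hα : ∀ k, IsPrimitiveRoot (α k) (r k)) (f g : Idx r → F) (h : fourier α f = fourier α g) :
    f = g := by
  have : (fun i => algebraMap F L (f i - g i)) = (0 : Idx r → L) := by
    apply fourier_inj r α hα
    funext j
    have := congrFun h j
    simp only [fourier] at this
    simp [fourier, map_sub, sub_mul, Finset.sum_sub_distrib, this]
  funext i
  have := congrFun this i
  simpa [sub_eq_zero] using this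

/-- convolution powers -/
def cpow {s : ℕ} {r : Fin s → ℕ} [∀ k, NeZero (r k)] (f : Idx r → F) : ℕ → Idx r → F
  | 0 => f
  | n+1 => conv f (cpow f n)

theorem exists_idem {s : ℕ} {r : Fin s → ℕ} [∀ k, NeZero (r k)] [Finite F] (α : Fin s → L)
    (hα : ∀ k, IsPrimitiveRoot (α k) (r k))
    (C : Submodule F (Idx r → F)) (hC : IsAbelianCode C) (f : Idx r → F) (hf : f ∈ C) :
    ∃ e ∈ C, conv e e = e ∧ ∀ j, fourier α e j = 0 ↔ fourier α f j = 0 := by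
  have hmem : ∀ n, cpow f n ∈ C := by
    intro n
    induction n with
    | zero => exact hf
    | succ n ih => exact conv_mem C hC _ _ ih
  have hpow : ∀ n, fourier α (cpow f n) = fourier α f ^ (n + 1) := by
    intro n
    induction n with
    | zero => rw [zero_add, pow_one]; rfl
    | succ n ih => rw [cpow, fourier_conv α hα, ih, pow_succ' _ (n+1)]
  obtain ⟨m, n, hmn, he⟩ : ∃ m n, m < n ∧ cpow f m = cpow f n := by
    obtain ⟨m, n, hne, he⟩ := Finite.exists_ne_map_eq_of_infinite (cpow f)
    rcases lt_or_gt_of_ne hne with h | h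
    · exact ⟨m, n, h, he⟩
    · exact ⟨n, m, h, he.symm⟩
  obtain ⟨k, rfl⟩ := Nat.exists_eq_add_of_lt hmn
  refine ⟨cpow f k, hmem k, ?_, ?_⟩
  · apply fourier_inj' α hα
    rw [fourier_conv α hα, hpow]
    have h2 := hpow m
    rw [he, hpow] at h2
    funext j
    have h3 := congrFun h2 j
    simp only [Pi.pow_apply, Pi.mul_apply] at h3 ⊢
    by_cases h0 : fourier α f j = 0
    · simp [h0]
    · have : fourier α f j ^ (k + 1) = 1 := by
        have h4 : fourier α f j ^ (m + 1) * fourier α f j ^ (k + 1) =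
            fourier α f j ^ (m + 1) * 1 := by
          rw [mul_one, ← pow_add, ← h3]; congr 1; omega
        exact mul_left_cancel₀ (pow_ne_zero _ h0) h4
      rw [this, one_mul]
  · intro j
    rw [hpow, Pi.pow_apply, pow_eq_zero_iff (by omega)]

/-- **Camion.** For any abelian code `C` in `A_q(r_1,…,r_s)`, the
apparent distance of `C` is a lower bound for its minimum distance:
`d*(C) ≤ d(C)`. -/
theorem apparentDistance_le_minimumDistance
    {s : ℕ} (r : Fin s → ℕ) [∀ k, NeZero (r k)] (hs : 0 < s)
    {F : Type*} [Field F] [Fintype F]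
    (hcop : ∀ k, (Fintype.card F).Coprime (r k))
    (L : Type*) [Field L] [Algebra F L]
    (hroots : ∀ k, ∃ ζ : L, IsPrimitiveRoot ζ (r k))
    (C : Submodule F (Idx r → F)) (hC : IsAbelianCode C) :
    dStarCode r L C ≤ dmin C := by
  refine csSup_le' ?_
  rintro d ⟨α, hα, rfl⟩
  by_cases hne : {w | ∃ f ∈ C, f ≠ (0 : Idx r → F) ∧ wt f = w}.Nonempty
  · obtain ⟨f, hf, hf0, hw⟩ := Nat.sInf_mem hne
    obtain ⟨e, heC, hee, hes⟩ := exists_idem α hα C hC f hf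
    have h1 : apd r (fourier α f) ≤ wt f := by
      rw [← fourier_map]
      refine (apd_le_wt r α hα _).trans (le_of_eq ?_)
      simp [wt]
    have he0 : e ≠ 0 := by
      rintro rfl
      apply hf0
      apply fourier_inj' α hα
      funext j
      have h0 : fourier α (0 : Idx r → F) j = 0 := by simp [fourier]
      rw [(hes j).1 h0, h0]
    unfold dmin
    rw [← hw]
    refine le_trans (Nat.sInf_le ⟨e, heC, he0, hee, rfl⟩) ?_
    rw [apd_congr r _ _ hes]
    exact h1
  · have : {d | ∃ e, e ∈ C ∧ e ≠ (0 : Idx r → F) ∧ conv e e = e ∧ apd r (fourier α e) = d} = ∅ := by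
      rw [Set.eq_empty_iff_forall_notMem]
      rintro d ⟨e, he, he0, -⟩
      exact hne ⟨_, e, he, he0, rfl⟩
    rw [dStarAlpha, this]
    simp

end AbelianCodes
end
end

section
/- Let B_q(α,γ,δ,b) be a multivariate BCH code with δ = {δ_k ≥ 2 : k ∈ γ} and b = {b_k ≥ 0 : k ∈ γ}. Then dim_{F_q} B_q(α,γ,δ,b) ≥ ∏_{j=1}^s r_j − m·(Σ_{k∈γ} (δ_k−1)·∏_{j≠k} r_j), where m = lcm{O_{r_k}(q) : k = 1,…,s} and O_r(q) denotes the multiplicative order of q modulo r. -/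
open Classical

noncomputable section

namespace AbelianCodes

variable {F : Type*} [Field F]

variable {F : Type*} [Field F] {L : Type*} [Field L] [Algebra F L]

section helpers

lemma pow_mul_add_val {L : Type*} [Field L] {n : ℕ} [NeZero n] {x : L} (hx : x ^ n = 1)
    (a b : ZMod n) (c : ℕ) :
    x ^ ((a + b).val * c) = x ^ (a.val * c) * x ^ (b.val * c) := by
  have h : ∀ m : ℕ, x ^ (m % n) = x ^ m := fun m => (pow_eq_pow_mod m hx).symm
  rw [pow_mul, ZMod.val_add, h, pow_add, mul_pow, ← pow_mul, ← pow_mul]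

/-- the character attached to an index -/
def chi {L : Type*} [Field L] {s : ℕ} {r : Fin s → ℕ} [∀ k, NeZero (r k)] (α : Fin s → L)
    (hα : ∀ k, IsPrimitiveRoot (α k) (r k)) (a : Idx r) : AddChar (Idx r) L where
  toFun i := ∏ k, α k ^ ((i k).val * (a k).val)
  map_zero_eq_one' := by simp
  map_add_eq_mul' i j := by
    rw [← Finset.prod_mul_distrib]
    exact Finset.prod_congr rfl fun k _ => pow_mul_add_val (hα k).pow_eq_one _ _ _

lemma chi_apply {L : Type*} [Field L] {s : ℕ} {r : Fin s → ℕ} [∀ k, NeZero (r k)] (α : Fin s → L)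
    (hα : ∀ k, IsPrimitiveRoot (α k) (r k)) (a i : Idx r) :
    chi α hα a i = ∏ k, α k ^ ((i k).val * (a k).val) := rfl

lemma chi_injective {L : Type*} [Field L] {s : ℕ} {r : Fin s → ℕ} [∀ k, NeZero (r k)]
    (α : Fin s → L) (hα : ∀ k, IsPrimitiveRoot (α k) (r k)) :
    Function.Injective (chi (r := r) α hα) := by
  intro a b hab
  funext k
  have key : ∀ c : Idx r, chi α hα c (Pi.single k 1) = α k ^ (c k).val := by
    intro c
    rw [chi_apply, Finset.prod_eq_single k]
    · rw [Pi.single_eq_same, pow_mul, ZMod.val_one_eq_one_mod,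
        ← pow_eq_pow_mod 1 (hα k).pow_eq_one, pow_one]
    · intro j _ hj
      rw [Pi.single_eq_of_ne hj]; simp
    · simp
  have h := key a
  rw [hab, key b] at h
  exact ZMod.val_injective _ ((hα k).pow_inj (ZMod.val_lt _) (ZMod.val_lt _) h).symm

lemma dim_bound {s : ℕ} (r : Fin s → ℕ) [∀ k, NeZero (r k)]
    {F : Type*} [Field F] (L : Type*) [Field L] [Algebra F L]
    (α : Fin s → L) (hα : ∀ k, IsPrimitiveRoot (α k) (r k))
    (B : Submodule F (Idx r → F)) (hB : IsAbelianCode B) :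
    (Finset.univ.filter fun a => a ∉ defSet r α B).card ≤ Module.finrank F B := by
  let φ : (Idx r → F) →ₗ[F] (Idx r → L) := (Algebra.linearMap F L).compLeft (Idx r)
  let bs := Module.finBasis F B
  let W : Submodule L (Idx r → L) := Submodule.span L (Set.range fun i => φ (bs i))
  have hW : ∀ f ∈ B, φ f ∈ W := by
    intro f hf
    have h1 := congrArg (fun x : B => φ x) (bs.sum_repr ⟨f, hf⟩)
    simp only [Submodule.coe_sum, Submodule.coe_smul, map_sum, map_smul] at h1
    rw [← h1]
    refine Submodule.sum_mem _ fun i _ => ?_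
    rw [← algebraMap_smul L]
    exact W.smul_mem _ (Submodule.subset_span ⟨i, rfl⟩)
  have hWdim : Module.finrank L W ≤ Module.finrank F B := by
    have h := finrank_range_le_card (R := L) (fun i => φ (bs i))
    rw [Fintype.card_fin] at h
    exact h
  refine le_trans ?_ hWdim
  have hchi : ∀ a, a ∉ defSet r α B → (⇑(chi α hα a)⁻¹ : Idx r → L) ∈ W := by
    intro a ha
    simp only [defSet, Set.mem_setOf_eq, not_forall] at ha
    obtain ⟨f, hf, hne⟩ := ha
    have h2 : ∑ u : Idx r, chi α hα a u • φ (fun i => f (i - (-u))) ∈ W :=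
      Submodule.sum_mem _ fun u _ => W.smul_mem _ (hW _ (hB f hf _))
    have h3 : ∑ u : Idx r, chi α hα a u • φ (fun i => f (i - (-u)))
        = fourier α f a • (⇑(chi α hα a)⁻¹ : Idx r → L) := by
      funext i
      rw [Finset.sum_apply]
      simp only [Pi.smul_apply, smul_eq_mul, AddChar.inv_apply, fourier]
      rw [Finset.sum_mul, ← Equiv.sum_comp (Equiv.subRight i)]
      refine Finset.sum_congr rfl fun v _ => ?_
      have : i - -(v - i) = v := by abel
      simp only [Equiv.subRight_apply, φ, LinearMap.compLeft_apply, Function.comp, this,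
        Algebra.linearMap_apply, sub_eq_add_neg v i, AddChar.map_add_eq_mul]
      rw [← chi_apply α hα]
      simp only [neg_add_rev, neg_neg, sub_neg_eq_add, add_neg_cancel_comm_assoc]
      ring_nf
    rw [h3] at h2
    exact (W.smul_mem_iff hne).1 h2
  have hli : LinearIndependent L
      (fun a : {a // a ∉ defSet r α B} => (⟨_, hchi a.1 a.2⟩ : W)) := by
    apply LinearIndependent.of_comp W.subtype
    have := (linearIndependent_monoidHom (Multiplicative (Idx r)) L).comp
      (fun a : {a // a ∉ defSet r α B} => ((chi α hα a.1)⁻¹).toMonoidHom)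
      (AddChar.toMonoidHomEquiv.injective.comp <| inv_injective.comp ((chi_injective α hα).comp Subtype.val_injective))
    exact this
  have := hli.fintype_card_le_finrank
  rwa [Fintype.card_subtype] at this

lemma card_fiber {s : ℕ} (r : Fin s → ℕ) [∀ k, NeZero (r k)] (k : Fin s) (c : ZMod (r k)) :
    (Finset.univ.filter fun i : Idx r => i k = c).card ≤ ∏ j ∈ Finset.univ.erase k, r j := by
  have hsub : (Finset.univ.filter fun i : Idx r => i k = c) ⊆
      Fintype.piFinset (fun j => if h : j = k then {h ▸ c} else Finset.univ) := by
    intro i hi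
    rw [Finset.mem_filter] at hi
    rw [Fintype.mem_piFinset]
    intro j
    by_cases h : j = k
    · subst h; simp [hi.2]
    · simp [h]
  refine (Finset.card_le_card hsub).trans ?_
  rw [Fintype.card_piFinset, ← Finset.mul_prod_erase _ _ (Finset.mem_univ k)]
  simp only [dite_true, Finset.card_singleton, one_mul]
  refine le_of_eq (Finset.prod_congr rfl fun j hj => ?_)
  rw [dif_neg (Finset.ne_of_mem_erase hj), Finset.card_univ, ZMod.card]

lemma card_bch {s : ℕ} (r : Fin s → ℕ) [∀ k, NeZero (r k)] (q : ℕ)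
    (hcop : ∀ k, q.Coprime (r k)) (γ : Finset (Fin s)) (δ b : Fin s → ℕ) :
    (Finset.univ.filter fun a => a ∈ bchDefSet r q γ δ b).card ≤
      (Finset.univ.lcm fun k => orderOf ((q : ZMod (r k)))) *
          (∑ k ∈ γ, (δ k - 1) * ∏ j ∈ Finset.univ.erase k, r j) := by
  set m := Finset.univ.lcm fun k => orderOf ((q : ZMod (r k))) with hm
  have hm0 : 0 < m := by
    rw [Nat.pos_iff_ne_zero, hm, Ne, Finset.lcm_eq_zero_iff]
    rintro ⟨k, -, hk⟩
    have hu : orderOf ((ZMod.unitOfCoprime q (hcop k) : (ZMod (r k))ˣ) : ZMod (r k)) = 0 := hk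
    rw [orderOf_units] at hu
    exact (orderOf_pos _).ne' hu
  have hpow : ∀ k, (q : ZMod (r k)) ^ m = 1 := fun k =>
    orderOf_dvd_iff_pow_eq_one.1 (Finset.dvd_lcm (Finset.mem_univ k))
  have hsub : (Finset.univ.filter fun a => a ∈ bchDefSet r q γ δ b) ⊆
      γ.biUnion fun k => (Finset.range (δ k - 1)).biUnion fun l =>
        (Finset.range m).biUnion fun n =>
          (Finset.univ.filter fun i : Idx r => i k = ((b k + l : ℕ) : ZMod (r k))).image
            (fun i j => (q : ZMod (r j)) ^ n * i j) := by
    intro a ha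
    simp only [Finset.mem_filter, Finset.mem_univ, true_and, bchDefSet, Set.mem_iUnion,
      Set.mem_setOf_eq, qOrbit, exists_prop] at ha
    obtain ⟨k, hk, l, hl, i, hi, n, hn⟩ := ha
    simp only [Finset.mem_biUnion, Finset.mem_image, Finset.mem_filter, Finset.mem_univ, true_and]
    refine ⟨k, hk, l, hl, n % m, Finset.mem_range.2 (Nat.mod_lt _ hm0), i, hi, ?_⟩
    funext j
    rw [hn j, one_mul, ← pow_eq_pow_mod n (hpow j)]
  refine (Finset.card_le_card hsub).trans ?_
  refine Finset.card_biUnion_le.trans ?_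
  rw [Finset.mul_sum]
  refine Finset.sum_le_sum fun k _ => ?_
  refine (Finset.card_biUnion_le_card_mul _ _ (m * ∏ j ∈ Finset.univ.erase k, r j)
    fun l _ => ?_).trans (le_of_eq ?_)
  · refine (Finset.card_biUnion_le_card_mul _ _ (∏ j ∈ Finset.univ.erase k, r j)
      fun n _ => ?_).trans (le_of_eq ?_)
    · exact Finset.card_image_le.trans (card_fiber r k _)
    · rw [Finset.card_range]
  · rw [Finset.card_range]; ring

end helpers

/-- A multivariate BCH code `B = B_q(α,γ,δ,b)` satisfies
`dim_{F_q} B ≥ ∏_j r_j − m · Σ_{k∈γ} (δ_k−1) · ∏_{j≠k} r_j`, where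
`m = lcm {O_{r_k}(q)}` is the least common multiple of the multiplicative orders
of `q` modulo the `r_k`. -/
theorem bch_code_dimension_lower_bound
    {s : ℕ} (r : Fin s → ℕ) [∀ k, NeZero (r k)]
    {F : Type*} [Field F] [Fintype F]
    (hcop : ∀ k, (Fintype.card F).Coprime (r k))
    (L : Type*) [Field L] [Algebra F L]
    (α : Fin s → L) (hα : ∀ k, IsPrimitiveRoot (α k) (r k))
    (γ : Finset (Fin s)) (δ b : Fin s → ℕ)
    (hδ : ∀ k ∈ γ, 2 ≤ δ k ∧ δ k ≤ r k)
    (B : Submodule F (Idx r → F)) (hB : IsAbelianCode B)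
    (hBdef : defSet r α B = bchDefSet r (Fintype.card F) γ δ b) :
    (∏ j, r j) -
        (Finset.univ.lcm fun k => orderOf ((Fintype.card F : ZMod (r k)))) *
          (∑ k ∈ γ, (δ k - 1) * ∏ j ∈ Finset.univ.erase k, r j)
      ≤ Module.finrank F B := by
  have h1 := dim_bound r L α hα B hB
  have h2 := card_bch r (Fintype.card F) hcop γ δ b
  rw [hBdef] at h1
  have h3 := Finset.card_filter_add_card_filter_not (s := (Finset.univ : Finset (Idx r)))
    (fun a => a ∈ bchDefSet r (Fintype.card F) γ δ b)
  have h4 : (Finset.univ : Finset (Idx r)).card = ∏ j, r j := by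
    rw [Finset.card_univ, Fintype.card_pi]
    exact Finset.prod_congr rfl fun j _ => ZMod.card _
  rw [h4] at h3
  omega

end AbelianCodes
end
end
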